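/- Robin–Wronskian boundary identity: suppose s₀ > 0 satisfies the free boundary condition tanh(φ(s₀)) = B(s₀)·K/(a·sinh(2s₀)), let r := arcosh(A(s₀)·cosh(φ(s₀))), and let ψ : ℝ → ℝ be a twice continuously differentiable solution of (B·ψ')'(s) + B(s)·(|II|²(s) − 2)·ψ(s) = 0 with ψ(0) = 1/(2·K) and ψ'(0) = 0, where |II|²(s) := 2·(B''(s)/B(s) − 1). Then, with u_*(s) := −a·sinh(2s)/B(s), one has ψ(s₀)·(B(s₀)² − 2·K²)/B(s₀)³ − (ψ'(s₀) − coth(r)·ψ(s₀))·u_*(s₀) = −a/(K·B(s₀)). -/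

import Mathlib

/-!
Rotational symmetry makes the boost field `u_* = -B'` a second solution of the mode-zero Jacobi
equation `(B u')' + B (|II|² - 2) u = 0`, so the weighted Wronskian `B (ψ' u_* - ψ u_*')` is
constant. At `s = 0` it equals `2 a ψ(0)`, because `u_*` is odd. At `s₀` the free boundary condition
says `coth r = -u_*(s₀) / B(s₀)`, which is exactly what turns the Robin expression into
`ψ u_*' - ψ' u_*`, that is, into the Wronskian divided by `-B(s₀)`.
-/

namespace MoriCatenoid

/-- Profile function `B(s) = √(a·cosh(2s) − 1/2)` of the Mori family. -/
noncomputable def B (a s : ℝ) : ℝ := Real.sqrt (a * Real.cosh (2 * s) - 1 / 2)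

/-- Profile function `A(s) = √(a·cosh(2s) + 1/2)` of the Mori family. -/
noncomputable def A (a s : ℝ) : ℝ := Real.sqrt (a * Real.cosh (2 * s) + 1 / 2)

/-- The constant `K = √(a² − 1/4)`. -/
noncomputable def K (a : ℝ) : ℝ := Real.sqrt (a ^ 2 - 1 / 4)

/-- The angle function `φ(s) = K·∫₀ˢ dt/(A(t)²·B(t))`. -/
noncomputable def φ (a s : ℝ) : ℝ := K a * ∫ t in (0:ℝ)..s, 1 / ((A a t) ^ 2 * B a t)

/-- The mode-one Jacobi field `f_*(s) = d/ds (A(s)·cosh(φ(s)))`. -/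
noncomputable def fstar (a s : ℝ) : ℝ := deriv (fun t => A a t * Real.cosh (φ a t)) s

/-- Squared norm of the second fundamental form, `|II|²(s) = 2·(B''(s)/B(s) − 1)`. -/
noncomputable def IIsq (a s : ℝ) : ℝ := 2 * (deriv (deriv (B a)) s / B a s - 1)

/-- The mode-`k` potential `W_k(s) = |II|²(s) − 2 − k²/B(s)²`. -/
noncomputable def W (a : ℝ) (k : ℤ) (s : ℝ) : ℝ := IIsq a s - 2 - (k : ℝ) ^ 2 / (B a s) ^ 2

/-- Inverse hyperbolic cosine: `arcosh x = log (x + √(x² − 1))`. -/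
noncomputable def arcosh (x : ℝ) : ℝ := Real.log (x + Real.sqrt (x ^ 2 - 1))

/-- The axial boost field `u_*(s) = −a·sinh(2s)/B(s)`. -/
noncomputable def ustar (a s : ℝ) : ℝ := -a * Real.sinh (2 * s) / B a s

/-- The radial quadratic form of mode `k`:
`S_k(u) = ∫_{−s₀}^{s₀} (B·u'² − B·W_k·u²) − coth(r)·B(s₀)·(u(s₀)² + u(−s₀)²)`,
where `u'` is the derivative of `u` within `[−s₀, s₀]`. -/
noncomputable def Sk (a s₀ r : ℝ) (k : ℤ) (u : ℝ → ℝ) : ℝ :=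
  (∫ s in (-s₀)..s₀,
      (B a s * (derivWithin u (Set.Icc (-s₀) s₀) s) ^ 2 - B a s * W a k s * u s ^ 2))
    - Real.cosh r / Real.sinh r * B a s₀ * (u s₀ ^ 2 + u (-s₀) ^ 2)

section SturmLiouville

variable {𝕜 : Type*} [NontriviallyNormedField 𝕜]

/-- The Sturm–Liouville operator `u ↦ (p u')' + q u`; the mode-zero Jacobi operator of the Mori
family is the case `p = B`, `q = B (|II|² - 2)`. -/
noncomputable def sturmLiouville (p q u : 𝕜 → 𝕜) (s : 𝕜) : 𝕜 :=
  deriv (fun t => p t * deriv u t) s + q s * u s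

/-- The Wronskian `p (u' v - u v')` weighted by the leading coefficient `p`, the quantity conserved
by two solutions of `(p u')' + q u = 0`. -/
noncomputable def wronskian (p u v : 𝕜 → 𝕜) (s : 𝕜) : 𝕜 :=
  p s * (deriv u s * v s - u s * deriv v s)

theorem hasDerivAt_wronskian {p u v : 𝕜 → 𝕜} {s : 𝕜}
    (q : 𝕜 → 𝕜) (hu : DifferentiableAt 𝕜 u s) (hv : DifferentiableAt 𝕜 v s)
    (hpu : DifferentiableAt 𝕜 (fun t => p t * deriv u t) s)
    (hpv : DifferentiableAt 𝕜 (fun t => p t * deriv v t) s) :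
    HasDerivAt (wronskian p u v)
      (sturmLiouville p q u s * v s - u s * sturmLiouville p q v s) s := by
  have h := (hpu.hasDerivAt.mul hv.hasDerivAt).sub (hu.hasDerivAt.mul hpv.hasDerivAt)
  refine (h.congr_deriv ?_).congr_of_eventuallyEq (.of_forall fun t => ?_)
  · simp only [sturmLiouville]
    ring
  · simp only [wronskian, Pi.sub_apply, Pi.mul_apply]
    ring

theorem wronskian_eq_of_sturmLiouville_eq_zero {p q u v : ℝ → ℝ} {x y : ℝ} (hxy : x ≤ y)
    (hu : Differentiable ℝ u) (hv : Differentiable ℝ v)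
    (hpu : Differentiable ℝ fun t => p t * deriv u t)
    (hpv : Differentiable ℝ fun t => p t * deriv v t)
    (hLu : ∀ s ∈ Set.Ioo x y, sturmLiouville p q u s = 0)
    (hLv : ∀ s ∈ Set.Ioo x y, sturmLiouville p q v s = 0) :
    wronskian p u v y = wronskian p u v x := by
  rcases hxy.eq_or_lt with rfl | hlt
  · rfl
  have hW (s : ℝ) := hasDerivAt_wronskian q (hu s) (hv s) (hpu s) (hpv s)
  obtain ⟨c, hc, hslope⟩ := exists_hasDerivAt_eq_slope _ _ hlt
    (fun s _ => (hW s).continuousAt.continuousWithinAt) fun s _ => hW s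
  rw [hLu c hc, hLv c hc, zero_mul, mul_zero, sub_zero, eq_comm,
    div_eq_zero_iff, sub_eq_zero] at hslope
  exact hslope.resolve_right (sub_pos.2 hlt).ne'

end SturmLiouville

section Profile

variable {a : ℝ}

theorem mul_cosh_sub_half_pos (ha : 1 / 2 < a) (s : ℝ) : 0 < a * Real.cosh (2 * s) - 1 / 2 := by
  nlinarith [Real.one_le_cosh (2 * s)]

theorem B_pos (ha : 1 / 2 < a) (s : ℝ) : 0 < B a s :=
  Real.sqrt_pos.2 (mul_cosh_sub_half_pos ha s)

theorem B_sq (ha : 1 / 2 < a) (s : ℝ) : B a s ^ 2 = a * Real.cosh (2 * s) - 1 / 2 :=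
  Real.sq_sqrt (mul_cosh_sub_half_pos ha s).le

theorem A_sq (ha : 1 / 2 < a) (s : ℝ) : A a s ^ 2 = B a s ^ 2 + 1 := by
  rw [B_sq ha, A, Real.sq_sqrt (by linarith [mul_cosh_sub_half_pos ha s])]
  ring

theorem one_le_A (ha : 1 / 2 < a) (s : ℝ) : 1 ≤ A a s :=
  Real.one_le_sqrt.2 (by linarith [mul_cosh_sub_half_pos ha s])

theorem K_sq (ha : 1 / 2 < a) : K a ^ 2 = a ^ 2 - 1 / 4 :=
  Real.sq_sqrt (by nlinarith)

theorem mul_sinh_pos {s : ℝ} (ha : 0 < a) (hs : 0 < s) : 0 < a * Real.sinh (2 * s) :=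
  mul_pos ha (Real.sinh_pos_iff.2 (by linarith))

theorem sq_mul_sinh (ha : 1 / 2 < a) (s : ℝ) :
    (a * Real.sinh (2 * s)) ^ 2 = B a s ^ 4 + B a s ^ 2 - K a ^ 2 := by
  linear_combination K_sq ha - a ^ 2 * Real.cosh_sq (2 * s)
    - (B a s ^ 2 + a * Real.cosh (2 * s) + 1 / 2) * B_sq ha s

theorem hasDerivAt_B (ha : 1 / 2 < a) (s : ℝ) : HasDerivAt (B a) (-ustar a s) s := by
  have hrad : HasDerivAt (fun t => a * Real.cosh (2 * t) - 1 / 2)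
      (a * (Real.sinh (2 * s) * 2)) s :=
    ((hasDerivAt_const_mul 2).cosh.const_mul a).sub_const _
  refine (hrad.sqrt (mul_cosh_sub_half_pos ha s).ne').congr_deriv ?_
  rw [ustar, B]
  ring

end Profile

section BoostField

variable {a : ℝ}

theorem hasDerivAt_ustar (ha : 1 / 2 < a) (s : ℝ) :
    HasDerivAt (ustar a) (-(B a s + K a ^ 2 / B a s ^ 3)) s := by
  have hB := (B_pos ha s).ne'
  have hnum : HasDerivAt (fun t => -a * Real.sinh (2 * t)) (-a * (Real.cosh (2 * s) * 2)) s :=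
    (hasDerivAt_const_mul 2).sinh.const_mul (-a)
  refine (hnum.div (hasDerivAt_B ha s) hB).congr_deriv ?_
  rw [ustar]
  field_simp
  linear_combination sq_mul_sinh ha s + 2 * B a s ^ 2 * B_sq ha s

theorem deriv_ustar (ha : 1 / 2 < a) : deriv (ustar a) = fun s => -(B a s + K a ^ 2 / B a s ^ 3) :=
  funext fun s => (hasDerivAt_ustar ha s).deriv

theorem ustar_sq (ha : 1 / 2 < a) (s : ℝ) :
    ustar a s ^ 2 = B a s ^ 2 + 1 - K a ^ 2 / B a s ^ 2 := by
  have hB := (B_pos ha s).ne'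
  rw [ustar]
  field_simp
  linear_combination sq_mul_sinh ha s

theorem IIsq_eq (ha : 1 / 2 < a) (s : ℝ) : IIsq a s = 2 * K a ^ 2 / B a s ^ 4 := by
  have hB := (B_pos ha s).ne'
  have hB' : deriv (B a) = fun t => -ustar a t := funext fun t => (hasDerivAt_B ha t).deriv
  rw [IIsq, hB', (hasDerivAt_ustar ha s).fun_neg.deriv]
  field_simp
  ring

theorem hasDerivAt_B_mul_deriv_ustar (ha : 1 / 2 < a) (s : ℝ) :
    HasDerivAt (fun t => B a t * deriv (ustar a) t)
      (-(B a s * (IIsq a s - 2) * ustar a s)) s := by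
  have hB := (B_pos ha s).ne'
  have hBd := hasDerivAt_B ha s
  rw [deriv_ustar ha, IIsq_eq ha]
  refine (hBd.mul (hBd.add ((hasDerivAt_const s (K a ^ 2)).div (hBd.pow 3)
    (pow_ne_zero 3 hB))).neg).congr_deriv ?_
  simp only [Pi.neg_apply, Pi.add_apply, Pi.div_apply, Pi.pow_apply]
  field_simp
  ring

theorem sturmLiouville_ustar (ha : 1 / 2 < a) (s : ℝ) :
    sturmLiouville (B a) (fun t => B a t * (IIsq a t - 2)) (ustar a) s = 0 := by
  rw [sturmLiouville, (hasDerivAt_B_mul_deriv_ustar ha s).deriv, neg_add_cancel]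

theorem wronskian_ustar_zero (ha : 1 / 2 < a) (ψ : ℝ → ℝ) :
    wronskian (B a) ψ (ustar a) 0 = 2 * a * ψ 0 := by
  have hB := (B_pos ha 0).ne'
  have hB0 : B a 0 ^ 2 = a - 1 / 2 := by simpa using B_sq ha 0
  have hu0 : ustar a 0 = 0 := by simp [ustar]
  rw [wronskian, hu0, deriv_ustar ha]
  field_simp
  linear_combination ψ 0 * (K_sq ha + (B a 0 ^ 2 - a - 1 / 2) * hB0)

end BoostField

section FreeBoundary

variable {a s θ : ℝ}

theorem sq_A_mul_cosh (ha : 1 / 2 < a) (hs : 0 < s)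
    (hθ : Real.tanh θ = B a s * K a / (a * Real.sinh (2 * s))) :
    (A a s * Real.cosh θ) ^ 2 * (B a s ^ 2 - K a ^ 2) = (a * Real.sinh (2 * s)) ^ 2 := by
  have hS := mul_sinh_pos (one_half_pos.trans ha) hs
  rw [Real.tanh_eq_sinh_div_cosh, div_eq_div_iff (Real.cosh_pos θ).ne' hS.ne'] at hθ
  have hθsq : (Real.cosh θ ^ 2 - 1) * (a * Real.sinh (2 * s)) ^ 2
      = (B a s * K a * Real.cosh θ) ^ 2 := by
    rw [← Real.sinh_sq, ← mul_pow, hθ]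
  rw [mul_pow, A_sq ha]
  linear_combination hθsq - Real.cosh θ ^ 2 * sq_mul_sinh ha s

theorem coth_arcosh_eq (ha : 1 / 2 < a) (hs : 0 < s)
    (hθ : Real.tanh θ = B a s * K a / (a * Real.sinh (2 * s))) :
    Real.cosh (arcosh (A a s * Real.cosh θ)) / Real.sinh (arcosh (A a s * Real.cosh θ))
      = -ustar a s / B a s := by
  have hB := B_pos ha s
  have hS := mul_sinh_pos (one_half_pos.trans ha) hs
  have hx : 1 ≤ A a s * Real.cosh θ :=
    one_le_mul_of_one_le_of_one_le (one_le_A ha s) (Real.one_le_cosh θ)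
  have hcosh : Real.cosh (arcosh (A a s * Real.cosh θ)) = A a s * Real.cosh θ :=
    Real.cosh_arcosh hx
  set r := arcosh (A a s * Real.cosh θ)
  have hr : 0 ≤ Real.sinh r := Real.sinh_nonneg_iff.2 (Real.arcosh_nonneg hx)
  have hcross : Real.cosh r * B a s ^ 2 = a * Real.sinh (2 * s) * Real.sinh r := by
    rw [← sq_eq_sq₀ (by positivity) (mul_nonneg hS.le hr)]
    have hsq := sq_A_mul_cosh ha hs hθ
    rw [← hcosh] at hsq
    linear_combination -Real.cosh r ^ 2 * sq_mul_sinh ha s - hsq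
      - (a * Real.sinh (2 * s)) ^ 2 * Real.sinh_sq r
  have hr' : Real.sinh r ≠ 0 := by
    refine right_ne_zero_of_mul (a := a * Real.sinh (2 * s)) ?_
    rw [← hcross]
    positivity
  rw [ustar]
  field_simp
  linear_combination hcross

theorem robin_eq_neg_wronskian_div (ha : 1 / 2 < a) (ψ : ℝ → ℝ) (s : ℝ) :
    ψ s * ((B a s ^ 2 - 2 * K a ^ 2) / B a s ^ 3)
      - (deriv ψ s - -ustar a s / B a s * ψ s) * ustar a s
      = -wronskian (B a) ψ (ustar a) s / B a s := by
  have hB := (B_pos ha s).ne'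
  have husq := ustar_sq ha s
  rw [wronskian, deriv_ustar ha]
  field_simp at husq ⊢
  linear_combination -ψ s * husq

end FreeBoundary

theorem robin_wronskian_identity_general {a s₀ θ r : ℝ} (ha : 1 / 2 < a) (hs₀ : 0 < s₀)
    (hFBC : Real.tanh θ = B a s₀ * K a / (a * Real.sinh (2 * s₀)))
    (hr : r = arcosh (A a s₀ * Real.cosh θ)) {ψ : ℝ → ℝ} (hψ : ContDiff ℝ 2 ψ)
    (hode : ∀ s ∈ Set.Ioo 0 s₀, deriv (fun t => B a t * deriv ψ t) s
        + B a s * (IIsq a s - 2) * ψ s = 0) :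
    ψ s₀ * ((B a s₀ ^ 2 - 2 * K a ^ 2) / B a s₀ ^ 3)
      - (deriv ψ s₀ - Real.cosh r / Real.sinh r * ψ s₀) * ustar a s₀
      = -(2 * a * ψ 0) / B a s₀ := by
  have hBψ : Differentiable ℝ fun t => B a t * deriv ψ t := fun t =>
    (hasDerivAt_B ha t).differentiableAt.mul (hψ.differentiable_deriv_two t)
  have hconst : wronskian (B a) ψ (ustar a) s₀ = wronskian (B a) ψ (ustar a) 0 :=
    wronskian_eq_of_sturmLiouville_eq_zero hs₀.le (hψ.differentiable two_ne_zero)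
      (fun t => (hasDerivAt_ustar ha t).differentiableAt) hBψ
      (fun t => (hasDerivAt_B_mul_deriv_ustar ha t).differentiableAt)
      hode fun t _ => sturmLiouville_ustar ha t
  rw [hr, coth_arcosh_eq ha hs₀ hFBC, robin_eq_neg_wronskian_div ha, hconst,
    wronskian_ustar_zero ha]

/-- Robin–Wronskian boundary identity: under the free boundary condition, for a
`C²` solution `ψ` of the mode-zero Jacobi equation with `ψ(0) = 1/(2K)` and
`ψ'(0) = 0`, one has
`ψ(s₀)·(B(s₀)² − 2K²)/B(s₀)³ − (ψ'(s₀) − coth(r)·ψ(s₀))·u_*(s₀) = −a/(K·B(s₀))`. -/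
theorem robin_wronskian_identity (a : ℝ) (ha : 1 / 2 < a) (s₀ : ℝ) (hs₀ : 0 < s₀)
    (hFBC : Real.tanh (φ a s₀) = B a s₀ * K a / (a * Real.sinh (2 * s₀)))
    (r : ℝ) (hr : r = arcosh (A a s₀ * Real.cosh (φ a s₀)))
    (ψ : ℝ → ℝ) (hψ : ContDiff ℝ 2 ψ)
    (hode : ∀ s : ℝ, deriv (fun t => B a t * deriv ψ t) s
        + B a s * (IIsq a s - 2) * ψ s = 0)
    (hψ0 : ψ 0 = 1 / (2 * K a)) (hψ0' : deriv ψ 0 = 0) :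
    ψ s₀ * ((B a s₀ ^ 2 - 2 * K a ^ 2) / B a s₀ ^ 3)
      - (deriv ψ s₀ - Real.cosh r / Real.sinh r * ψ s₀) * ustar a s₀
      = -a / (K a * B a s₀) := by
  rw [robin_wronskian_identity_general ha hs₀ hFBC hr hψ fun s _ => hode s, hψ0]
  ring

end MoriCatenoid
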